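/- Let Λ, Λ' ⊆ ℕ₀^d be finite lower sets. Then the sumset Λ ⊕ Λ' is a lower set, and M(Λ ⊕ Λ') = M(Λ) ⊕ M(Λ'), where the right-hand sumset is taken in ℤ^d. -/

import Mathlib

open Pointwise

/-- A set `Λ ⊆ ℕ₀^d` is lower (downward closed). -/
def IsLower {d : ℕ} (Λ : Set (Fin d → ℕ)) : Prop :=
  ∀ k ∈ Λ, ∀ h : Fin d → ℕ, (∀ j, h j ≤ k j) → h ∈ Λ

/-- The mirrored set `M(Λ) = {h ∈ ℤ^d : |h| ∈ Λ}`. -/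
def mirror {d : ℕ} (Λ : Set (Fin d → ℕ)) : Set (Fin d → ℤ) :=
  {h | (fun j => (h j).natAbs) ∈ Λ}

/-- Integer dot product. -/
def dotZ {d : ℕ} (h z : Fin d → ℤ) : ℤ := ∑ j, h j * z j

/-- Cast a multi-index in `ℕ₀^d` to `ℤ^d`. -/
def natCast {d : ℕ} (h : Fin d → ℕ) : Fin d → ℤ := fun j => (h j : ℤ)

/-- `s` is a component-wise sign flip of `h`. -/
def IsSignFlip {d : ℕ} (h : Fin d → ℕ) (s : Fin d → ℤ) : Prop :=
  ∀ j, (s j).natAbs = h j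

/-- Plan 0 admissibility: `h·z ≢ 0 (mod n)` for all nonzero `h ∈ M(Λ)`. -/
def Plan0 {d : ℕ} (Λ : Set (Fin d → ℕ)) (n : ℕ) (z : Fin d → ℤ) : Prop :=
  ∀ h ∈ mirror Λ, h ≠ 0 → ¬ (dotZ h z ≡ 0 [ZMOD (n : ℤ)])

/-- Plan A admissibility: `h·z ≢ h'·z (mod n)` for all distinct `h, h' ∈ M(Λ)`. -/
def PlanA {d : ℕ} (Λ : Set (Fin d → ℕ)) (n : ℕ) (z : Fin d → ℤ) : Prop :=
  ∀ h ∈ mirror Λ, ∀ h' ∈ mirror Λ, h ≠ h' →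
    ¬ (dotZ h z ≡ dotZ h' z [ZMOD (n : ℤ)])

/-- Plan B admissibility. -/
def PlanB {d : ℕ} (Λ : Set (Fin d → ℕ)) (n : ℕ) (z : Fin d → ℤ) : Prop :=
  ∀ h ∈ Λ, ∀ h' ∈ Λ, ∀ s : Fin d → ℤ, IsSignFlip h s → s ≠ natCast h' →
    ¬ (dotZ s z ≡ dotZ (natCast h') z [ZMOD (n : ℤ)])

/-- Plan C admissibility. -/
def PlanC {d : ℕ} (Λ : Set (Fin d → ℕ)) (n : ℕ) (z : Fin d → ℤ) : Prop :=
  ∀ h ∈ Λ, ∀ h' ∈ Λ, h ≠ h' → ∀ s : Fin d → ℤ, IsSignFlip h s →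
    ¬ (dotZ s z ≡ dotZ (natCast h') z [ZMOD (n : ℤ)])

/-!
Both halves rest on splitting a bound. If `h ≤ a + b` in `ℕ₀^d`, then `h` is the sum of the
truncated difference `h - b ≤ a` and its complement `h - (h - b) ≤ b`; hence sums of lower sets are
lower. If `|h| = a + b`, then giving `a` and `b` the signs of `h` writes `h` as a sum of vectors
with absolute values `a` and `b`, so `M(Λ + Λ') ⊆ M(Λ) + M(Λ')`. The other inclusion is the
triangle inequality in each coordinate, together with the fact that `Λ + Λ'` is lower.
-/

section LowerSet

variable {M : Type*} [AddCommMonoid M] [PartialOrder M] [CanonicallyOrderedAdd M] [Sub M]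
  [OrderedSub M]

theorem exists_le_le_add_eq_of_le_add {a b c : M} (h : c ≤ a + b) :
    ∃ a' ≤ a, ∃ b' ≤ b, a' + b' = c :=
  ⟨c - b, tsub_le_iff_right.2 h, c - (c - b), tsub_tsub_le, add_tsub_cancel_of_le tsub_le_self⟩

theorem isLowerSet_add {s t : Set M} (hs : IsLowerSet s) (ht : IsLowerSet t) :
    IsLowerSet (s + t) := by
  rintro _ c hc ⟨a, ha, b, hb, rfl⟩
  obtain ⟨a', ha', b', hb', rfl⟩ := exists_le_le_add_eq_of_le_add hc
  exact Set.add_mem_add (hs ha' ha) (ht hb' hb)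

end LowerSet

theorem exists_natAbs_eq_natAbs_eq_add_eq {n : ℤ} {a b : ℕ} (h : n.natAbs = a + b) :
    ∃ x y : ℤ, x.natAbs = a ∧ y.natAbs = b ∧ x + y = n := by
  rcases Int.natAbs_eq n with hn | hn
  · exact ⟨a, b, Int.natAbs_natCast a, Int.natAbs_natCast b, by omega⟩
  · exact ⟨-a, -b, by simp, by simp, by omega⟩

section Mirror

variable {d : ℕ} {Λ Λ' : Set (Fin d → ℕ)}

theorem isLower_iff_isLowerSet : IsLower Λ ↔ IsLowerSet Λ :=
  ⟨fun h k l hlk hk => h k hk l hlk, fun h _ hk _ hlk => h hlk hk⟩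

theorem IsLower.add (hΛ : IsLower Λ) (hΛ' : IsLower Λ') : IsLower (Λ + Λ') :=
  isLower_iff_isLowerSet.2 <|
    isLowerSet_add (isLower_iff_isLowerSet.1 hΛ) (isLower_iff_isLowerSet.1 hΛ')

theorem IsSignFlip.exists_add_eq {a b : Fin d → ℕ} {s : Fin d → ℤ} (hs : IsSignFlip (a + b) s) :
    ∃ u v, IsSignFlip a u ∧ IsSignFlip b v ∧ u + v = s := by
  choose u v hu hv huv using fun j => exists_natAbs_eq_natAbs_eq_add_eq (hs j)
  exact ⟨u, v, hu, hv, funext huv⟩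

theorem mem_mirror_iff_exists_isSignFlip {s : Fin d → ℤ} :
    s ∈ mirror Λ ↔ ∃ h ∈ Λ, IsSignFlip h s := by
  refine ⟨fun hs => ⟨_, hs, fun _ => rfl⟩, ?_⟩
  rintro ⟨h, hh, hs⟩
  obtain rfl : (fun j => (s j).natAbs) = h := funext hs
  exact hh

variable (Λ Λ') in
theorem mirror_add_subset : mirror (Λ + Λ') ⊆ mirror Λ + mirror Λ' := by
  intro s hs
  obtain ⟨_, ⟨a, ha, b, hb, rfl⟩, hflip⟩ := mem_mirror_iff_exists_isSignFlip.1 hs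
  obtain ⟨u, v, hu, hv, rfl⟩ := hflip.exists_add_eq
  exact Set.add_mem_add (mem_mirror_iff_exists_isSignFlip.2 ⟨a, ha, hu⟩)
    (mem_mirror_iff_exists_isSignFlip.2 ⟨b, hb, hv⟩)

theorem mirror_add_mirror_subset (h : IsLower (Λ + Λ')) :
    mirror Λ + mirror Λ' ⊆ mirror (Λ + Λ') := by
  rintro _ ⟨u, hu, v, hv, rfl⟩
  exact h _ (Set.add_mem_add hu hv) _ fun j => Int.natAbs_add_le (u j) (v j)

end Mirror

theorem sumset_lower_and_mirror_sum_general {d : ℕ} {Λ Λ' : Set (Fin d → ℕ)}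
    (hΛ : IsLower Λ) (hΛ' : IsLower Λ') :
    IsLower (Λ + Λ') ∧ mirror (Λ + Λ') = mirror Λ + mirror Λ' :=
  have hadd : IsLower (Λ + Λ') := hΛ.add hΛ'
  ⟨hadd, (mirror_add_subset Λ Λ').antisymm (mirror_add_mirror_subset hadd)⟩

theorem sumset_lower_and_mirror_sum {d : ℕ} (Λ Λ' : Set (Fin d → ℕ))
    (hfin : Λ.Finite) (hfin' : Λ'.Finite) (hlow : IsLower Λ) (hlow' : IsLower Λ') :
    IsLower (Λ + Λ') ∧ mirror (Λ + Λ') = mirror Λ + mirror Λ' :=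
  sumset_lower_and_mirror_sum_general hlow hlow'
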